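/- arXiv:1201.0697 — 4 statements merged into one kernel-verified Lean document; each statement's English description precedes it below -/
import Mathlib

section
/- For every finite nonempty subset W of the vertices of the infinite hexagonal grid G∞, the number of neighbor vertices satisfies |𝒩(W)| ≥ l₁(W) + l₂(W) + l₃(W), where l_i(W) is the number of direction-i rows containing a vertex of W. -/
/-- Adjacency of the infinite hexagonal grid `G∞` in brick-wall coordinates on `ℤ × ℤ`:
`(x,y)` and `(x',y')` are adjacent iff `y' = y` and `|x' - x| = 1`, or
`x' = x` and `|y' - y| = 1` and `x + min y y'` is even. -/
def hexAdj (v w : ℤ × ℤ) : Prop :=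
  (v.2 = w.2 ∧ (v.1 - w.1).natAbs = 1) ∨
  (v.1 = w.1 ∧ (v.2 - w.2).natAbs = 1 ∧ Even (v.1 + min v.2 w.2))

/-- The neighborhood `𝒩(W)`: vertices not in `W` adjacent to some vertex of `W`. -/
def hexNbhd (W : Set (ℤ × ℤ)) : Set (ℤ × ℤ) :=
  {v | v ∉ W ∧ ∃ w ∈ W, hexAdj v w}

/-- The boundary `ℬ(W)`: vertices of `W` adjacent to some vertex not in `W`. -/
def hexBdry (W : Set (ℤ × ℤ)) : Set (ℤ × ℤ) :=
  {v | v ∈ W ∧ ∃ w, w ∉ W ∧ hexAdj v w}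

/-- The outgoing edges `ℰ(W)`, encoded as ordered pairs `(v, w)` with `v ∈ W`, `w ∉ W`
and `v` adjacent to `w`; each edge with exactly one endpoint in `W` corresponds to
exactly one such pair. -/
def hexCutEdges (W : Set (ℤ × ℤ)) : Set ((ℤ × ℤ) × (ℤ × ℤ)) :=
  {p | p.1 ∈ W ∧ p.2 ∉ W ∧ hexAdj p.1 p.2}

/-- The hexagonal cell `C(a,b)`, with vertex set `{(2a+b+i, b+j) : i ∈ {0,1,2}, j ∈ {0,1}}`. -/
def hexCell (a b : ℤ) : Set (ℤ × ℤ) :=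
  {(2*a+b, b), (2*a+b+1, b), (2*a+b+2, b),
   (2*a+b, b+1), (2*a+b+1, b+1), (2*a+b+2, b+1)}

/-- The vertex set `V(G_r)` of the finite hexagonal grid of radius `r`: the union of the
cells `C(a,b)` with `(|a| + |b| + |a+b|)/2 ≤ r - 1`. -/
def gridVerts (r : ℕ) : Set (ℤ × ℤ) :=
  {v | ∃ a b : ℤ, a.natAbs + b.natAbs + (a+b).natAbs ≤ 2*(r-1) ∧ v ∈ hexCell a b}

/-- `𝒩_{G_r}(W)`: vertices of `V(G_r) \ W` adjacent to some vertex of `W`. -/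
def hexNbhdIn (r : ℕ) (W : Set (ℤ × ℤ)) : Set (ℤ × ℤ) :=
  {v | v ∈ gridVerts r ∧ v ∉ W ∧ ∃ w ∈ W, hexAdj v w}

/-- `ℬ_{G_r}(W)`: vertices of `W` adjacent to some vertex of `V(G_r) \ W`. -/
def hexBdryIn (r : ℕ) (W : Set (ℤ × ℤ)) : Set (ℤ × ℤ) :=
  {v | v ∈ W ∧ ∃ w, w ∈ gridVerts r ∧ w ∉ W ∧ hexAdj v w}

/-- `ℰ_{G_r}(W)`: the edges of `G_r` with exactly one endpoint in `W ⊆ V(G_r)`, encoded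
as ordered pairs `(v, w)` with `v ∈ W`, `w ∈ V(G_r) \ W`, `v` adjacent to `w`. -/
def hexCutEdgesIn (r : ℕ) (W : Set (ℤ × ℤ)) : Set ((ℤ × ℤ) × (ℤ × ℤ)) :=
  {p | p.1 ∈ W ∧ p.2 ∈ gridVerts r ∧ p.2 ∉ W ∧ hexAdj p.1 p.2}

/-- The index `ind_i(x,y)` of the direction-`i` row containing `(x,y)`
(directions numbered `0, 1, 2` for the paper's `1, 2, 3`):
`ind_1 = y`, `ind_2 = ⌊(y-x)/2⌋`, `ind_3 = ⌊(x+y)/2⌋`. -/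
def rowInd : Fin 3 → ℤ × ℤ → ℤ
  | 0, v => v.2
  | 1, v => Int.fdiv (v.2 - v.1) 2
  | 2, v => Int.fdiv (v.1 + v.2) 2

/-- The linear parameter `p_i` along direction-`i` rows:
`p_1 = x`, `p_2 = x + y`, `p_3 = x - y`. -/
def rowParam : Fin 3 → ℤ × ℤ → ℤ
  | 0, v => v.1
  | 1, v => v.1 + v.2
  | 2, v => v.1 - v.2

/-- A set of integers is consecutive if it contains every integer between any two of
its elements. -/
def ConsecutiveSet (S : Set ℤ) : Prop :=
  ∀ a ∈ S, ∀ b ∈ S, ∀ k : ℤ, a ≤ k → k ≤ b → k ∈ S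

/-- `v` is an outermost neighbor of `W` for direction `i`: the direction-`i` row of `v`
is gray, and the parameter of `v` is `m - 1` or `M + 1`, where `m` and `M` are the
minimum and maximum of the parameter over `W` intersected with that row. -/
def IsOutermostNeighbor (W : Set (ℤ × ℤ)) (i : Fin 3) (v : ℤ × ℤ) : Prop :=
  (rowParam i v + 1 ∈ rowParam i '' {w ∈ W | rowInd i w = rowInd i v} ∧
    ∀ q ∈ rowParam i '' {w ∈ W | rowInd i w = rowInd i v}, rowParam i v + 1 ≤ q) ∨
  (rowParam i v - 1 ∈ rowParam i '' {w ∈ W | rowInd i w = rowInd i v} ∧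
    ∀ q ∈ rowParam i '' {w ∈ W | rowInd i w = rowInd i v}, q ≤ rowParam i v - 1)

/-!
Call a vertex outside `W` a frontier vertex of a row through it if exactly one of its two neighbors
in that row lies in `W`. Every gray row has at least two frontier vertices, one just beyond each
extremal vertex of `W` in the row, so the three directions provide at least `2 (l₁ + l₂ + l₃)`
pairs of a row and a frontier vertex. Conversely, the three rows through a vertex `v` contain the
three pairs of neighbors of `v`; two of these neighbors are both in `W` or both outside `W`, so `v`
is a frontier vertex of at most two rows. As frontier vertices belong to `𝒩(W)`, there are at most
`2 |𝒩(W)|` such pairs.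
-/

section Permutation

variable {V α β : Type*} [LinearOrder β] {W : Set V} {ind : V → α} {height : V → β}
  {e : Equiv.Perm V}

/-- The points `v` at which an orbit of `e` leaves `W` and stays outside for at least two steps.
Those of `e` and `e.symm` partition `orbitFrontier e W`. -/
def orbitExits (e : Equiv.Perm V) (W : Set V) : Set V :=
  {v | v ∉ W ∧ e.symm v ∈ W ∧ e v ∉ W}

/-- The points outside `W` with exactly one of their two neighbors along the orbit of `e` in `W`.
Points with both neighbors in `W` are left out, so that no vertex of the grid lies in the frontiers
of all three rows through it. -/
def orbitFrontier (e : Equiv.Perm V) (W : Set V) : Set V :=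
  {v | v ∉ W ∧ Xor (e v ∈ W) (e.symm v ∈ W)}

theorem orbitExits_finite (hW : W.Finite) (e : Equiv.Perm V) : (orbitExits e W).Finite :=
  (hW.image e).subset fun v hv => ⟨e.symm v, hv.2.1, e.apply_symm_apply v⟩

theorem orbitExits_union_symm (e : Equiv.Perm V) (W : Set V) :
    orbitExits e W ∪ orbitExits e.symm W = orbitFrontier e W := by
  ext v
  simp only [orbitExits, orbitFrontier, Set.mem_union, Set.mem_ofPred_eq, Equiv.symm_symm, Xor]
  tauto

theorem disjoint_orbitExits_symm (e : Equiv.Perm V) (W : Set V) :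
    Disjoint (orbitExits e W) (orbitExits e.symm W) :=
  Set.disjoint_left.2 fun _ hv hv' => hv'.2.2 hv.2.1

theorem ncard_image_le_ncard_orbitExits (hW : W.Finite) (hind : ∀ v, ind (e v) = ind v)
    (hheight : ∀ v, height v < height (e v)) :
    (ind '' W).ncard ≤ (orbitExits e W).ncard := by
  have hfin := orbitExits_finite hW e
  suffices h : ind '' W ⊆ ind '' orbitExits e W from
    (Set.ncard_le_ncard h (hfin.image ind)).trans (Set.ncard_image_le hfin)
  rintro _ ⟨w, hw, rfl⟩
  obtain ⟨m, ⟨hmW, hm⟩, hmax⟩ := Set.exists_max_image {u ∈ W | ind u = ind w} height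
    (hW.subset (Set.sep_subset _ _)) ⟨w, hw, rfl⟩
  have notMem_of_lt : ∀ u, ind u = ind w → height m < height u → u ∉ W :=
    fun u hu hlt huW => hlt.not_ge (hmax u ⟨huW, hu⟩)
  have hem : ind (e m) = ind w := (hind m).trans hm
  refine ⟨e m, ⟨notMem_of_lt _ hem (hheight m), ?_, ?_⟩, hem⟩
  · rwa [e.symm_apply_apply]
  · exact notMem_of_lt _ ((hind _).trans hem) ((hheight m).trans (hheight _))

theorem two_mul_ncard_image_le_ncard_orbitFrontier (hW : W.Finite)
    (hind : ∀ v, ind (e v) = ind v) (hheight : ∀ v, height v < height (e v)) :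
    2 * (ind '' W).ncard ≤ (orbitFrontier e W).ncard := by
  have hexits : (ind '' W).ncard ≤ (orbitExits e W).ncard :=
    ncard_image_le_ncard_orbitExits hW hind hheight
  have hexits_symm : (ind '' W).ncard ≤ (orbitExits e.symm W).ncard :=
    ncard_image_le_ncard_orbitExits (height := OrderDual.toDual ∘ height) hW
      (fun v => by rw [← hind, e.apply_symm_apply])
      fun v => by simpa using hheight (e.symm v)
  rw [← orbitExits_union_symm, Set.ncard_union_eq (disjoint_orbitExits_symm e W)
    (orbitExits_finite hW e) (orbitExits_finite hW e.symm)]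
  omega

end Permutation

theorem sum_ncard_le_mul_ncard {ι V : Type*} [Fintype ι] {A : ι → Set V} {N : Set V} {k : ℕ}
    (hN : N.Finite) (hAN : ∀ i, A i ⊆ N) (hk : ∀ v ∈ N, {i | v ∈ A i}.ncard ≤ k) :
    ∑ i, (A i).ncard ≤ k * N.ncard := by
  classical
  lift N to Finset V using hN
  have hA (i : ι) : (A i).ncard = (N.bipartiteAbove (fun i v => v ∈ A i) i).card := by
    rw [← Set.ncard_coe_finset, Finset.coe_bipartiteAbove]
    exact congrArg _ (Set.inter_eq_right.2 (hAN i)).symm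
  calc ∑ i, (A i).ncard
      = ∑ v ∈ N, (Finset.univ.bipartiteBelow (fun i v => v ∈ A i) v).card := by
        simp only [hA, Finset.sum_card_bipartiteAbove_eq_sum_card_bipartiteBelow]
    _ ≤ N.card • k := Finset.sum_le_card_nsmul _ _ _ fun v hv => by
        simpa [← Set.ncard_coe_finset] using hk v hv
    _ = k * (N : Set V).ncard := by rw [Set.ncard_coe_finset, smul_eq_mul, mul_comm]

/-- The neighbor of `v` across its unique edge of direction `i`, the directions being numbered
`0, 1, 2` as in `rowInd`. -/
def hexNeighbor (i : Fin 3) (v : ℤ × ℤ) : ℤ × ℤ :=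
  match i with
  | 0 => if Even (v.1 + v.2) then (v.1, v.2 + 1) else (v.1, v.2 - 1)
  | 1 => if Even (v.1 + v.2) then (v.1 + 1, v.2) else (v.1 - 1, v.2)
  | 2 => if Even (v.1 + v.2) then (v.1 - 1, v.2) else (v.1 + 1, v.2)

theorem hexAdj_iff_exists_hexNeighbor {v w : ℤ × ℤ} :
    hexAdj v w ↔ ∃ i, hexNeighbor i v = w := by
  obtain ⟨x, y⟩ := v
  obtain ⟨x', y'⟩ := w
  simp only [Fin.exists_fin_succ (n := 2), Fin.exists_fin_two, Fin.succ_zero_eq_one,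
    Fin.succ_one_eq_two, hexAdj, hexNeighbor, Int.even_iff]
  split_ifs <;> simp only [Prod.mk.injEq] <;> omega

theorem even_hexNeighbor (i : Fin 3) (v : ℤ × ℤ) :
    Even ((hexNeighbor i v).1 + (hexNeighbor i v).2) ↔ ¬ Even (v.1 + v.2) := by
  fin_cases i <;> simp only [hexNeighbor] <;> grind

theorem hexNeighbor_involutive (i : Fin 3) : Function.Involutive (hexNeighbor i) := by
  intro v
  fin_cases i <;> simp only [hexNeighbor] <;> grind

theorem rowInd_hexNeighbor {i j : Fin 3} (hij : i ≠ j) (v : ℤ × ℤ) :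
    rowInd i (hexNeighbor j v) = rowInd i v := by
  fin_cases i <;> fin_cases j <;>
    first
    | exact absurd rfl hij
    | simp only [hexNeighbor, rowInd]; grind

theorem hexNbhd_finite {W : Set (ℤ × ℤ)} (hW : W.Finite) : (hexNbhd W).Finite := by
  refine (Set.finite_iUnion fun i => hW.image (hexNeighbor i)).subset ?_
  rintro v ⟨-, w, hw, hvw⟩
  obtain ⟨i, rfl⟩ := hexAdj_iff_exists_hexNeighbor.1 hvw
  exact Set.mem_iUnion.2 ⟨i, _, hw, hexNeighbor_involutive i v⟩

/-- The shift by one vertex along the direction-`i` rows, whose edges have the two directions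
`i + 1` and `i + 2` alternately. It increases `rowParam i` for `i = 0` and decreases it
for `i = 1, 2`. -/
def rowShift (i : Fin 3) : Equiv.Perm (ℤ × ℤ) where
  toFun v := if Even (v.1 + v.2) then hexNeighbor (i + 1) v else hexNeighbor (i + 2) v
  invFun v := if Even (v.1 + v.2) then hexNeighbor (i + 2) v else hexNeighbor (i + 1) v
  left_inv v := by
    by_cases hv : Even (v.1 + v.2) <;> simp [hv, even_hexNeighbor, hexNeighbor_involutive _ v]
  right_inv v := by
    by_cases hv : Even (v.1 + v.2) <;> simp [hv, even_hexNeighbor, hexNeighbor_involutive _ v]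

theorem rowShift_apply (i : Fin 3) (v : ℤ × ℤ) : rowShift i v =
    if Even (v.1 + v.2) then hexNeighbor (i + 1) v else hexNeighbor (i + 2) v :=
  rfl

theorem rowShift_symm_apply (i : Fin 3) (v : ℤ × ℤ) : (rowShift i).symm v =
    if Even (v.1 + v.2) then hexNeighbor (i + 2) v else hexNeighbor (i + 1) v :=
  rfl

theorem rowInd_rowShift (i : Fin 3) (v : ℤ × ℤ) : rowInd i (rowShift i v) = rowInd i v := by
  rw [rowShift_apply]
  split_ifs
  · exact rowInd_hexNeighbor (by simp) v
  · exact rowInd_hexNeighbor (by simp) v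

theorem exists_height_lt_rowShift (i : Fin 3) :
    ∃ height : ℤ × ℤ → ℤ, ∀ v, height v < height (rowShift i v) := by
  match i with
  | 0 => exact ⟨rowParam 0, fun v => by grind [rowShift_apply, hexNeighbor, rowParam]⟩
  | 1 => exact ⟨fun v => -rowParam 1 v, fun v => by grind [rowShift_apply, hexNeighbor, rowParam]⟩
  | 2 => exact ⟨fun v => -rowParam 2 v, fun v => by grind [rowShift_apply, hexNeighbor, rowParam]⟩

section RowFrontier

variable {W : Set (ℤ × ℤ)} {i : Fin 3} {v : ℤ × ℤ}

theorem mem_orbitFrontier_rowShift : v ∈ orbitFrontier (rowShift i) W ↔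
    v ∉ W ∧ Xor (hexNeighbor (i + 1) v ∈ W) (hexNeighbor (i + 2) v ∈ W) := by
  simp only [orbitFrontier, Set.mem_ofPred_eq, rowShift_apply, rowShift_symm_apply]
  split_ifs
  · rfl
  · rw [xor_comm]

theorem orbitFrontier_rowShift_subset_hexNbhd :
    orbitFrontier (rowShift i) W ⊆ hexNbhd W := by
  intro v hv
  obtain ⟨hvW, ⟨hmem, -⟩ | ⟨hmem, -⟩⟩ := mem_orbitFrontier_rowShift.1 hv
  · exact ⟨hvW, _, hmem, hexAdj_iff_exists_hexNeighbor.2 ⟨_, rfl⟩⟩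
  · exact ⟨hvW, _, hmem, hexAdj_iff_exists_hexNeighbor.2 ⟨_, rfl⟩⟩

theorem exists_notMem_orbitFrontier_rowShift (W : Set (ℤ × ℤ)) (v : ℤ × ℤ) :
    ∃ i, v ∉ orbitFrontier (rowShift i) W := by
  by_contra! hv
  have h₁₂ := (mem_orbitFrontier_rowShift.1 (hv 0)).2
  have h₂₀ := (mem_orbitFrontier_rowShift.1 (hv 1)).2
  have h₀₁ := (mem_orbitFrontier_rowShift.1 (hv 2)).2
  simp only [Fin.isValue, Fin.reduceAdd, Xor] at h₁₂ h₂₀ h₀₁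
  tauto

theorem ncard_mem_orbitFrontier_rowShift_le_two (W : Set (ℤ × ℤ)) (v : ℤ × ℤ) :
    {i | v ∈ orbitFrontier (rowShift i) W}.ncard ≤ 2 := by
  have hne : {i | v ∈ orbitFrontier (rowShift i) W} ≠ Set.univ :=
    (Set.ne_univ_iff_exists_notMem _).2 (exists_notMem_orbitFrontier_rowShift W v)
  simpa [Nat.lt_succ_iff] using Set.ncard_lt_card hne

end RowFrontier

/-- For every finite nonempty vertex set `W`, `|𝒩(W)| ≥ l₁(W) + l₂(W) + l₃(W)`, where
`l_i(W)` is the number of gray direction-`i` rows. -/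
theorem nbhd_ge_sum_gray_rows (W : Set (ℤ × ℤ)) (hW : W.Finite) (hne : W.Nonempty) :
    (rowInd 0 '' W).ncard + (rowInd 1 '' W).ncard + (rowInd 2 '' W).ncard ≤
      (hexNbhd W).ncard := by
  have hrow (i : Fin 3) :
      2 * (rowInd i '' W).ncard ≤ (orbitFrontier (rowShift i) W).ncard := by
    obtain ⟨height, hheight⟩ := exists_height_lt_rowShift i
    exact two_mul_ncard_image_le_ncard_orbitFrontier hW (rowInd_rowShift i) hheight
  have hsum : 2 * ∑ i, (rowInd i '' W).ncard ≤ 2 * (hexNbhd W).ncard := calc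
    2 * ∑ i, (rowInd i '' W).ncard
    _ = ∑ i, 2 * (rowInd i '' W).ncard := Finset.mul_sum ..
    _ ≤ ∑ i, (orbitFrontier (rowShift i) W).ncard := Finset.sum_le_sum fun i _ => hrow i
    _ ≤ 2 * (hexNbhd W).ncard :=
      sum_ncard_le_mul_ncard (hexNbhd_finite hW) (fun _ => orbitFrontier_rowShift_subset_hexNbhd)
        fun v _ => ncard_mem_orbitFrontier_rowShift_le_two W v
  rw [← Fin.sum_univ_three fun i => (rowInd i '' W).ncard]
  exact Nat.le_of_mul_le_mul_left hsum two_pos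
end

section
/- Let W be a finite nonempty subset of the vertices of the infinite hexagonal grid G∞ that has no bad rows in any of the three directions (i.e. for each i ∈ {1,2,3} the index set I_i(W) is a set of consecutive integers), and write l_i = l_i(W). Then |W| ≤ −(l₁² + l₂² + l₃²)/2 + l₁l₂ + l₁l₃ + l₂l₃. -/
/-!
A vertex is determined by its direction-2 index `a`, its direction-3 index `b` and a bit
`e ∈ {0, 1}`, and its direction-1 index is then `a + b + e`. So `|W|` is at most the number of
solutions of `a + b + e ∈ C` with `a ∈ A`, `b ∈ B`, where `A`, `B`, `C` are the index sets of `W`;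
put `d = |A| + |B| - |C|`, so that the claimed bound is `2 |A| |B| - d ^ 2 / 2`. On the hook
`a = min A` or `b = max B` distinct pairs have distinct sums `a + b`, so a hook holds at most
`2 |C|` solutions. Deleting it lowers `d` by two, and the bound follows by induction from the cases
`d = 0`, which is trivial, and `d = 1`, where `|A + B + {0, 1}| ≥ |A| + |B| > |C|` shows that some
triple is not a solution. Consecutiveness enters through the triangle inequalities for `|A|`, `|B|`,
`|C|`: between two vertices, each index changes by at most one more than the other two together.
-/

section SumTriples

open Finset
open scoped Pointwise

section Add

variable {α : Type*} [Add α] [DecidableEq α]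

/-- The triples `(a, b, e) ∈ A × B × E` whose sum lies in `C`. With `E = {0, 1}`, these are the
hexagonal grid vertices whose rows of directions 2, 3, 1 have their index in `A`, `B`, `C`. -/
def sumTriples (A B E C : Finset α) : Finset (α × α × α) :=
  {t ∈ A ×ˢ B ×ˢ E | t.1 + t.2.1 + t.2.2 ∈ C}

lemma card_sumTriples_le (A B E C : Finset α) : #(sumTriples A B E C) ≤ #A * (#B * #E) :=
  (card_filter_le _ _).trans_eq (by simp only [card_product])

lemma card_sumTriples_lt {A B E C : Finset α} (hC : #C < #(A + B + E)) :
    #(sumTriples A B E C) < #A * (#B * #E) := by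
  obtain ⟨s, hs, hsC⟩ := exists_mem_notMem_of_card_lt_card hC
  obtain ⟨_, hab, e, he, rfl⟩ := mem_add.1 hs
  obtain ⟨a, ha, b, hb, rfl⟩ := mem_add.1 hab
  rw [← card_product, ← card_product]
  exact card_lt_card (filter_ssubset.2
    ⟨(a, b, e), mem_product.2 ⟨ha, mem_product.2 ⟨hb, he⟩⟩, hsC⟩)

end Add

section Ordered

variable {α : Type*} [Add α] [IsCancelAdd α] [LinearOrder α] [AddLeftMono α] [AddRightMono α]

lemma card_add_card_add_card_le_card_add_add_add_two {A B E : Finset α} (hA : A.Nonempty)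
    (hB : B.Nonempty) (hE : E.Nonempty) : #A + #B + #E ≤ #(A + B + E) + 2 := by
  have hAB := cauchy_davenport_add_of_linearOrder_isCancelAdd hA hB
  have hABE := cauchy_davenport_add_of_linearOrder_isCancelAdd (hA.add hB) hE
  omega

lemma eq_and_eq_of_add_eq_add_of_hook {a₀ b₀ a b a' b' : α} (ha : a₀ ≤ a) (hb : b ≤ b₀)
    (ha' : a₀ ≤ a') (hb' : b' ≤ b₀) (h : a = a₀ ∨ b = b₀) (h' : a' = a₀ ∨ b' = b₀)
    (hadd : a + b = a' + b') : a = a' ∧ b = b' := by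
  rcases h with rfl | rfl <;> rcases h' with rfl | rfl
  · exact ⟨rfl, add_left_cancel hadd⟩
  · exact (add_eq_add_iff_eq_and_eq ha' hb).1 hadd
  · exact ((add_eq_add_iff_eq_and_eq ha hb').1 hadd.symm).imp Eq.symm Eq.symm
  · exact ⟨add_right_cancel hadd, rfl⟩

lemma card_sumTriples_hook_le {A B E C : Finset α} {a₀ b₀ : α}
    (ha₀ : a₀ ∈ lowerBounds (A : Set α)) (hb₀ : b₀ ∈ upperBounds (B : Set α)) :
    #{t ∈ sumTriples A B E C | t.1 = a₀ ∨ t.2.1 = b₀} ≤ #C * #E := by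
  rw [← card_product]
  refine card_le_card_of_injOn (fun t => (t.1 + t.2.1 + t.2.2, t.2.2)) ?_ ?_
  · rintro ⟨a, b, e⟩ ht
    simp only [sumTriples, coe_filter, mem_filter, mem_product, Set.mem_ofPred_eq] at ht
    exact mem_product.2 ⟨ht.1.2, ht.1.1.2.2⟩
  · rintro ⟨a, b, e⟩ ht ⟨a', b', e'⟩ ht' heq
    simp only [sumTriples, coe_filter, mem_filter, mem_product, Set.mem_ofPred_eq] at ht ht'
    obtain ⟨⟨⟨ha, hb, -⟩, -⟩, hhook⟩ := ht
    obtain ⟨⟨⟨ha', hb', -⟩, -⟩, hhook'⟩ := ht'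
    obtain ⟨hadd, rfl⟩ := Prod.mk.inj heq
    obtain ⟨rfl, rfl⟩ := eq_and_eq_of_add_eq_add_of_hook (ha₀ ha) (hb₀ hb) (ha₀ ha') (hb₀ hb')
      hhook hhook' (add_right_cancel hadd)
    rfl

lemma card_sumTriples_le_add_erase {A B E C : Finset α} {a₀ b₀ : α}
    (ha₀ : a₀ ∈ lowerBounds (A : Set α)) (hb₀ : b₀ ∈ upperBounds (B : Set α)) :
    #(sumTriples A B E C) ≤ #C * #E + #(sumTriples (A.erase a₀) (B.erase b₀) E C) := by
  rw [← card_filter_add_card_filter_not fun t : α × α × α => t.1 = a₀ ∨ t.2.1 = b₀]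
  refine add_le_add (card_sumTriples_hook_le ha₀ hb₀) (card_le_card fun t ht => ?_)
  simp only [sumTriples, mem_filter, mem_product, mem_erase] at ht ⊢
  tauto

lemma two_mul_card_sumTriples_add_sq_le {A B E C : Finset α} {d : ℕ} (hE : #E = 2)
    (hd : #A + #B = #C + d) (hA : #A ≤ #B + #C) (hB : #B ≤ #A + #C) :
    2 * #(sumTriples A B E C) + d ^ 2 ≤ 4 * (#A * #B) := by
  induction d using Nat.twoStepInduction generalizing A B with
  | zero =>
    have h := card_sumTriples_le A B E C
    rw [hE] at h
    linarith
  | one =>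
    have hAne : A.Nonempty := card_pos.1 (by omega)
    have hBne : B.Nonempty := card_pos.1 (by omega)
    have hsum := card_add_card_add_card_le_card_add_add_add_two hAne hBne
      (card_pos.1 (by omega : 0 < #E))
    have h : #(sumTriples A B E C) < #A * (#B * #E) := card_sumTriples_lt (by omega)
    rw [hE] at h
    linarith
  | more d ih _ =>
    have hAne : A.Nonempty := card_pos.1 (by omega)
    have hBne : B.Nonempty := card_pos.1 (by omega)
    have hpeel := card_sumTriples_le_add_erase (E := E) (C := C)
      (A.isLeast_min' hAne).2 (B.isGreatest_max' hBne).2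
    have hA' := card_erase_add_one (A.min'_mem hAne)
    have hB' := card_erase_add_one (B.max'_mem hBne)
    have hrest := ih (A := A.erase (A.min' hAne)) (B := B.erase (B.max' hBne))
      (by omega) (by omega) (by omega)
    rw [hE] at hpeel
    rw [← hA', ← hB'] at hd ⊢
    linarith

end Ordered

end SumTriples

lemma rowInd_zero_eq_add (v : ℤ × ℤ) :
    rowInd 0 v = rowInd 1 v + rowInd 2 v + (v.1 + v.2) % 2 := by
  simp only [rowInd, Int.fdiv_eq_ediv_of_nonneg _ zero_le_two]
  omega

lemma rowInd_one_rowInd_two_emod_injective :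
    Function.Injective fun v : ℤ × ℤ => (rowInd 1 v, rowInd 2 v, (v.1 + v.2) % 2) := by
  rintro ⟨x, y⟩ ⟨x', y'⟩ h
  simp only [rowInd, Prod.mk.injEq, Int.fdiv_eq_ediv_of_nonneg _ zero_le_two] at h ⊢
  omega

lemma card_le_card_sumTriples_rowInd (W : Finset (ℤ × ℤ)) :
    W.card ≤ (sumTriples (W.image (rowInd 1)) (W.image (rowInd 2)) {0, 1}
      (W.image (rowInd 0))).card := by
  refine Finset.card_le_card_of_injOn _ (fun v hv => ?_)
    rowInd_one_rowInd_two_emod_injective.injOn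
  refine Finset.mem_filter.2 ⟨?_, ?_⟩
  · simp only [Finset.mem_product, Finset.mem_insert, Finset.mem_singleton]
    exact ⟨Finset.mem_image_of_mem _ hv, Finset.mem_image_of_mem _ hv,
      Int.emod_two_eq_zero_or_one _⟩
  · rw [← rowInd_zero_eq_add]
    exact Finset.mem_image_of_mem _ hv

lemma ConsecutiveSet.natAbs_sub_lt_ncard {S : Set ℤ} (hS : ConsecutiveSet S) (hfin : S.Finite)
    {a b : ℤ} (ha : a ∈ S) (hb : b ∈ S) : (b - a).natAbs < S.ncard := by
  have hsub : ((Finset.uIcc a b : Finset ℤ) : Set ℤ) ⊆ S := by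
    intro k hk
    rcases Set.mem_uIcc.1 (Finset.coe_uIcc a b ▸ hk) with h | h
    · exact hS a ha b hb k h.1 h.2
    · exact hS b hb a ha k h.1 h.2
  have hcard := Set.ncard_le_ncard hsub hfin
  rwa [Set.ncard_coe_finset, Int.card_uIcc] at hcard

lemma exists_ncard_le_natAbs_sub_add_one {S : Set ℤ} (hfin : S.Finite) (hne : S.Nonempty) :
    ∃ a ∈ S, ∃ b ∈ S, S.ncard ≤ (b - a).natAbs + 1 := by
  obtain ⟨a, ha, hmin⟩ := S.exists_min_image id hfin hne
  obtain ⟨b, hb, hmax⟩ := S.exists_max_image id hfin hne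
  refine ⟨a, ha, b, hb, ?_⟩
  rw [← Int.card_uIcc, ← Set.ncard_coe_finset, Finset.coe_uIcc]
  exact Set.ncard_le_ncard fun k hk => Set.mem_uIcc_of_le (hmin k hk) (hmax k hk)

lemma ncard_image_le_add_of_consecutiveSet {ι : Type*} {s : Set ι} (hs : s.Finite)
    {f g h : ι → ℤ} (hg : ConsecutiveSet (g '' s)) (hh : ConsecutiveSet (h '' s))
    (hfgh : ∀ v ∈ s, ∀ w ∈ s,
      (f w - f v).natAbs ≤ (g w - g v).natAbs + (h w - h v).natAbs + 1) :
    (f '' s).ncard ≤ (g '' s).ncard + (h '' s).ncard := by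
  rcases s.eq_empty_or_nonempty with rfl | hne
  · simp only [Set.image_empty, Set.ncard_empty, le_refl, add_zero]
  obtain ⟨_, ⟨v, hv, rfl⟩, _, ⟨w, hw, rfl⟩, hf⟩ :=
    exists_ncard_le_natAbs_sub_add_one (hs.image f) (hne.image f)
  have hg_width := hg.natAbs_sub_lt_ncard (hs.image g) (Set.mem_image_of_mem g hv)
    (Set.mem_image_of_mem g hw)
  have hh_width := hh.natAbs_sub_lt_ncard (hs.image h) (Set.mem_image_of_mem h hv)
    (Set.mem_image_of_mem h hw)
  have hf_width := hfgh v hv w hw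
  omega

lemma natAbs_rowInd_sub_le {i j k : Fin 3} (hijk : [i, j, k].Nodup) (v w : ℤ × ℤ) :
    (rowInd i w - rowInd i v).natAbs ≤
      (rowInd j w - rowInd j v).natAbs + (rowInd k w - rowInd k v).natAbs + 1 := by
  have hv := rowInd_zero_eq_add v
  have hw := rowInd_zero_eq_add w
  fin_cases i <;> fin_cases j <;> fin_cases k <;>
    first
    | exact absurd hijk (by decide)
    | (simp only [Fin.reduceFinMk, Fin.zero_eta, Fin.mk_one]; omega)

lemma ncard_rowInd_le_add {W : Set (ℤ × ℤ)} (hW : W.Finite) {i j k : Fin 3}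
    (hijk : [i, j, k].Nodup) (hj : ConsecutiveSet (rowInd j '' W))
    (hk : ConsecutiveSet (rowInd k '' W)) :
    (rowInd i '' W).ncard ≤ (rowInd j '' W).ncard + (rowInd k '' W).ncard :=
  ncard_image_le_add_of_consecutiveSet hW hj hk fun v _ w _ => natAbs_rowInd_sub_le hijk v w

theorem card_le_of_no_bad_rows_general (W : Set (ℤ × ℤ)) (hW : W.Finite)
    (h₀ : (rowInd 0 '' W).ncard ≤ (rowInd 1 '' W).ncard + (rowInd 2 '' W).ncard)
    (h₁ : (rowInd 1 '' W).ncard ≤ (rowInd 2 '' W).ncard + (rowInd 0 '' W).ncard)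
    (h₂ : (rowInd 2 '' W).ncard ≤ (rowInd 1 '' W).ncard + (rowInd 0 '' W).ncard) :
    (W.ncard : ℝ) ≤
      -((((rowInd 0 '' W).ncard : ℝ))^2 + (((rowInd 1 '' W).ncard : ℝ))^2 +
          (((rowInd 2 '' W).ncard : ℝ))^2) / 2 +
        (((rowInd 0 '' W).ncard : ℝ) * ((rowInd 1 '' W).ncard : ℝ) +
          ((rowInd 0 '' W).ncard : ℝ) * ((rowInd 2 '' W).ncard : ℝ) +
          ((rowInd 1 '' W).ncard : ℝ) * ((rowInd 2 '' W).ncard : ℝ)) := by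
  lift W to Finset (ℤ × ℤ) using hW
  simp only [← Finset.coe_image, Set.ncard_coe_finset] at h₀ h₁ h₂ ⊢
  obtain ⟨d, hd⟩ := Nat.exists_eq_add_of_le h₀
  have hW := card_le_card_sumTriples_rowInd W
  have hsum := two_mul_card_sumTriples_add_sq_le (E := {0, 1}) rfl hd h₁ h₂
  have hcard : 2 * W.card + d ^ 2 ≤
      4 * ((W.image (rowInd 1)).card * (W.image (rowInd 2)).card) := by linarith
  rify at hcard hd
  rw [← sub_eq_iff_eq_add'] at hd
  rw [← hd] at hcard
  linarith

/-- If a finite nonempty vertex set `W` has no bad rows in any direction, then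
`|W| ≤ -(l₁² + l₂² + l₃²)/2 + l₁l₂ + l₁l₃ + l₂l₃` with `l_i = l_i(W)`. -/
theorem card_le_of_no_bad_rows (W : Set (ℤ × ℤ)) (hW : W.Finite) (hne : W.Nonempty)
    (hgood : ∀ i : Fin 3, ConsecutiveSet (rowInd i '' W)) :
    (W.ncard : ℝ) ≤
      -((((rowInd 0 '' W).ncard : ℝ))^2 + (((rowInd 1 '' W).ncard : ℝ))^2 +
          (((rowInd 2 '' W).ncard : ℝ))^2) / 2 +
        (((rowInd 0 '' W).ncard : ℝ) * ((rowInd 1 '' W).ncard : ℝ) +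
          ((rowInd 0 '' W).ncard : ℝ) * ((rowInd 2 '' W).ncard : ℝ) +
          ((rowInd 1 '' W).ncard : ℝ) * ((rowInd 2 '' W).ncard : ℝ)) := by
  exact card_le_of_no_bad_rows_general W hW
    (ncard_rowInd_le_add hW (by decide) (hgood 1) (hgood 2))
    (ncard_rowInd_le_add hW (by decide) (hgood 2) (hgood 0))
    (ncard_rowInd_le_add hW (by decide) (hgood 1) (hgood 0))
end

section
/- For every finite subset W of the vertices of the infinite hexagonal grid G∞, the boundary satisfies |ℬ(W)| ≥ √6 · √(|W| − |ℬ(W)|). -/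
/-!
The vertices of the honeycomb are the triangles of the triangular lattice, and the rows in the three
directions are its strips. Let `I = W \ ℬ(W)`, so that `𝒩(I) ⊆ ℬ(W)`, and let `k` be the number of
rows, over all three directions, that meet `I`.

Each row meeting `I` has two outermost neighbors of `I`. A vertex has only three neighbors, and for
each direction a different pair of them lies on its row; a vertex that is outermost for a direction
has exactly one element of that pair in `I`. This cannot happen for three pairs at once, so each
vertex is outermost for at most two directions, whence `2k ≤ 2|𝒩(I)|`.

Conversely `6|I| ≤ k²`. Let `A`, `B`, `C` be the sets of indices of the rows met by `I` in
directions 1, 2, 3. A vertex is determined by its parity and its rows in directions 2 and 3, and the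
sum of their indices is the index of its direction-1 row, or one less. So `|I|` is at most the
number of pairs in `B × C` with sum in `A`, plus the number of those with sum in `A - 1`. Peeling
hooks with pairwise distinct sums off `B × C` bounds either number by `|A| t + (|B| - t) (|C| - t)`,
and the optimal `t` gives `(|A| + |B| + |C|)² / 6` in total.
-/

namespace HexGrid

open Finset

lemma card_lt_card_union_of_ne {α : Type*} [DecidableEq α] {A A' : Finset α} (hcard : #A = #A')
    (hne : A ≠ A') : #A < #(A ∪ A') := by
  refine card_lt_card (subset_union_left.ssubset_of_ne fun h => hne ?_)
  exact (eq_of_subset_of_card_le (union_eq_left.1 h.symm) hcard.le).symm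

lemma image_ne_self_of_forall_lt {α : Type*} [LinearOrder α] {A : Finset α} {f : α → α}
    (hf : ∀ a, f a < a) (hA : A.Nonempty) : A.image f ≠ A := fun h =>
  (hf _).not_ge (A.min'_le _ (h.subset (mem_image_of_mem f (A.min'_mem hA))))

lemma twelve_mul_mul_le_sq {x y z : ℕ} (h : x + y ≤ z) : 12 * (x * y) ≤ (x + y + z) ^ 2 :=
  calc 12 * (x * y) ≤ (2 * (x + y)) ^ 2 := by nlinarith [four_mul_le_sq_add x y]
    _ ≤ (x + y + z) ^ 2 := by gcongr; omega

lemma six_mul_add_le_sq {p u n b c t t' : ℤ} (hun : u + n = 2 * p) (hpu : p < u)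
    (ht : t' = t ∨ t' = t + 1) (htt' : t + t' = b + c - p) :
    6 * (u * t + (b - t) * (c - t) + (n * t' + (b - t') * (c - t'))) ≤ (p + b + c) ^ 2 := by
  obtain rfl : n = 2 * p - u := by omega
  obtain rfl : p = b + c - t - t' := by omega
  rcases ht with rfl | rfl
  · nlinarith [sq_nonneg (b - c), sq_nonneg (b + c - 4 * t')]
  · nlinarith [sq_nonneg (b - c), sq_nonneg (b + c - 4 * t - 2)]

section SumCount

variable {α : Type*}

section Add

variable [Add α] [DecidableEq α]

/-- The number of pairs in `B × C` whose sum lies in `A`. With `A`, `B`, `C` the sets of indices of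
the rows met in the three directions, it bounds the number of vertices of one parity. -/
def sumCount (A B C : Finset α) : ℕ :=
  #{x ∈ B ×ˢ C | x.1 + x.2 ∈ A}

lemma card_le_sumCount {ι : Type*} {A B C : Finset α} {s : Finset ι} (f g : ι → α)
    (hinj : Set.InjOn (fun i => (f i, g i)) s) (hA : ∀ i ∈ s, f i + g i ∈ A)
    (hB : ∀ i ∈ s, f i ∈ B) (hC : ∀ i ∈ s, g i ∈ C) : #s ≤ sumCount A B C := by
  refine card_le_card_of_injOn _ (fun i hi => ?_) hinj
  rw [mem_coe] at hi
  simpa using ⟨⟨hB i hi, hC i hi⟩, hA i hi⟩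

lemma sumCount_le_card_mul_card (A B C : Finset α) : sumCount A B C ≤ #B * #C :=
  (card_filter_le _ _).trans (card_product B C).le

lemma sumCount_union_add_sumCount_inter (A A' B C : Finset α) :
    sumCount (A ∪ A') B C + sumCount (A ∩ A') B C = sumCount A B C + sumCount A' B C := by
  have h := card_union_add_card_inter {x ∈ B ×ˢ C | x.1 + x.2 ∈ A} {x ∈ B ×ˢ C | x.1 + x.2 ∈ A'}
  rw [← filter_or, ← filter_and] at h
  simpa only [sumCount, mem_union, mem_inter] using h

end Add

lemma injOn_add_of_eq_or_eq [AddCommMonoid α] [PartialOrder α] [IsOrderedCancelAddMonoid α]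
    (b c : α) :
    Set.InjOn (fun x : α × α => x.1 + x.2) {x | b ≤ x.1 ∧ x.2 ≤ c ∧ (x.1 = b ∨ x.2 = c)} := by
  have corner {x y : α} (hx : b ≤ x) (hy : y ≤ c) (h : b + y = x + c) : b = x ∧ y = c :=
    (add_eq_add_iff_eq_and_eq hx hy).1 h
  rintro ⟨x₁, x₂⟩ ⟨hx₁, hx₂, rfl | rfl⟩ ⟨y₁, y₂⟩ ⟨hy₁, hy₂, rfl | rfl⟩ h
  · exact Prod.ext rfl (add_left_cancel h)
  · exact Prod.ext_iff.2 (corner hy₁ hx₂ h)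
  · exact (Prod.ext_iff.2 (corner hx₁ hy₂ h.symm)).symm
  · exact Prod.ext (add_right_cancel h) rfl

variable [AddCommMonoid α] [LinearOrder α] [IsOrderedCancelAddMonoid α]

lemma exists_sumCount_le_card_add (A : Finset α) {B C : Finset α} (hB : B.Nonempty)
    (hC : C.Nonempty) :
    ∃ b ∈ B, ∃ c ∈ C, sumCount A B C ≤ #A + sumCount A (B.erase b) (C.erase c) := by
  refine ⟨B.min' hB, B.min'_mem hB, C.max' hC, C.max'_mem hC, ?_⟩
  set S := {x ∈ B ×ˢ C | x.1 + x.2 ∈ A} with hS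
  have hook : #{x ∈ S | x.1 = B.min' hB ∨ x.2 = C.max' hC} ≤ #A := by
    refine card_le_card_of_injOn (fun x => x.1 + x.2) (fun x hx => ?_)
      ((injOn_add_of_eq_or_eq (B.min' hB) (C.max' hC)).mono fun x hx => ?_)
    · exact (mem_filter.1 (mem_filter.1 hx).1).2
    · obtain ⟨hxS, hx⟩ := mem_filter.1 hx
      obtain ⟨hxB, hxC⟩ := mem_product.1 (mem_filter.1 hxS).1
      exact ⟨B.min'_le _ hxB, C.le_max' _ hxC, hx⟩
  have rest : #{x ∈ S | ¬(x.1 = B.min' hB ∨ x.2 = C.max' hC)} ≤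
      sumCount A (B.erase (B.min' hB)) (C.erase (C.max' hC)) := by
    refine card_le_card fun x hx => ?_
    simp only [hS, mem_filter, mem_product, mem_erase] at hx ⊢
    tauto
  calc #S = _ := (card_filter_add_card_filter_not _).symm
    _ ≤ _ := add_le_add hook rest

lemma sumCount_le (A : Finset α) {B C : Finset α} {t : ℕ} (hB : t ≤ #B) (hC : t ≤ #C) :
    sumCount A B C ≤ #A * t + (#B - t) * (#C - t) := by
  induction t generalizing B C with
  | zero => simpa using sumCount_le_card_mul_card A B C
  | succ t ih =>
    obtain ⟨b, hb, c, hc, h⟩ := exists_sumCount_le_card_add A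
      (card_pos.1 (t.succ_pos.trans_le hB)) (card_pos.1 (t.succ_pos.trans_le hC))
    have hB' := card_erase_of_mem hb
    have hC' := card_erase_of_mem hc
    calc sumCount A B C
        ≤ #A + sumCount A (B.erase b) (C.erase c) := h
      _ ≤ #A + (#A * t + (#(B.erase b) - t) * (#(C.erase c) - t)) := by
        gcongr
        exact ih (by omega) (by omega)
      _ = #A * (t + 1) + (#B - (t + 1)) * (#C - (t + 1)) := by
        rw [hB', hC', Nat.sub_sub, Nat.sub_sub, add_comm 1 t]
        ring

lemma six_mul_sumCount_add_sumCount_le {A A' : Finset α} (hcard : #A = #A') (hne : A ≠ A')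
    (B C : Finset α) : 6 * (sumCount A B C + sumCount A' B C) ≤ (#A + #B + #C) ^ 2 := by
  have hlt := card_lt_card_union_of_ne hcard hne
  have hsum : #(A ∪ A') + #(A ∩ A') = 2 * #A := by
    rw [card_union_add_card_inter, ← hcard, two_mul]
  by_cases hA : #B + #C ≤ #A
  · linarith [twelve_mul_mul_le_sq hA, sumCount_le_card_mul_card A B C,
      sumCount_le_card_mul_card A' B C]
  by_cases hB : #A + #C ≤ #B
  · have h := sumCount_le A (by omega : #C ≤ #B) le_rfl
    have h' := sumCount_le A' (by omega : #C ≤ #B) le_rfl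
    rw [Nat.sub_self, mul_zero] at h h'
    rw [← hcard] at h'
    linarith [twelve_mul_mul_le_sq hB]
  by_cases hC : #A + #B ≤ #C
  · have h := sumCount_le A le_rfl (by omega : #B ≤ #C)
    have h' := sumCount_le A' le_rfl (by omega : #B ≤ #C)
    rw [Nat.sub_self, zero_mul] at h h'
    rw [← hcard] at h'
    linarith [twelve_mul_mul_le_sq hC]
  -- `t` and `t'` are the roundings of the optimum `(#B + #C - #A) / 2`. When they differ, the loss
  -- is made up by using the smaller one for the union, which is larger than the intersection.
  obtain ⟨t, t', ht, htt'⟩ : ∃ t t' : ℕ, (t' = t ∨ t' = t + 1) ∧ t + t' + #A = #B + #C :=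
    ⟨(#B + #C - #A) / 2, (#B + #C - #A + 1) / 2, by omega, by omega⟩
  obtain ⟨htB, htC, htB', htC'⟩ : t ≤ #B ∧ t ≤ #C ∧ t' ≤ #B ∧ t' ≤ #C := by omega
  have hunion := sumCount_le (A ∪ A') htB htC
  have hinter := sumCount_le (A ∩ A') htB' htC'
  rw [← sumCount_union_add_sumCount_inter]
  zify [htB, htC, htB', htC'] at *
  linarith [six_mul_add_le_sq hsum hlt ht (eq_sub_of_add_eq htt')]

end SumCount

section Rows

variable {i : Fin 3} {v w : ℤ × ℤ}

lemma hexAdj_symm (h : hexAdj v w) : hexAdj w v := by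
  simp only [hexAdj, Int.even_iff] at h ⊢
  omega

lemma rowInd_one (v : ℤ × ℤ) : rowInd 1 v = (v.2 - v.1) / 2 :=
  Int.fdiv_eq_ediv_of_nonneg _ zero_le_two

lemma rowInd_two (v : ℤ × ℤ) : rowInd 2 v = (v.1 + v.2) / 2 :=
  Int.fdiv_eq_ediv_of_nonneg _ zero_le_two

lemma eq_of_rowInd_eq_of_rowParam_eq (hind : rowInd i v = rowInd i w)
    (hpar : rowParam i v = rowParam i w) : v = w := by
  match i with
  | 0 => exact Prod.ext hpar hind
  | 1 | 2 =>
    simp only [rowInd_one, rowInd_two, rowParam] at hind hpar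
    ext <;> omega

lemma exists_rowInd_eq_and_rowParam_eq (i : Fin 3) (r p : ℤ) :
    ∃ v, rowInd i v = r ∧ rowParam i v = p := by
  match i with
  | 0 => exact ⟨(p, r), rfl, rfl⟩
  | 1 => exact ⟨(p / 2 - r, r + (p + 1) / 2), by simp only [rowInd_one]; omega,
      by simp only [rowParam]; omega⟩
  | 2 => exact ⟨(r + (p + 1) / 2, r - p / 2), by simp only [rowInd_two]; omega,
      by simp only [rowParam]; omega⟩

lemma hexAdj_of_rowInd_eq (hind : rowInd i v = rowInd i w)
    (hpar : (rowParam i v - rowParam i w).natAbs = 1) : hexAdj v w := by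
  match i with
  | 0 => exact Or.inl ⟨hind, hpar⟩
  | 1 | 2 =>
    simp only [rowInd_one, rowInd_two, rowParam] at hind hpar
    simp only [hexAdj, Int.even_iff]
    omega

lemma rowInd_zero_eq_of_even (hv : Even (v.1 + v.2)) : rowInd 0 v = rowInd 1 v + rowInd 2 v := by
  rw [Int.even_iff] at hv
  rw [rowInd_one, rowInd_two, rowInd]
  omega

lemma rowInd_zero_eq_of_not_even (hv : ¬Even (v.1 + v.2)) :
    rowInd 0 v = rowInd 1 v + rowInd 2 v + 1 := by
  rw [Int.even_iff] at hv
  rw [rowInd_one, rowInd_two, rowInd]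
  omega

lemma eq_of_even_iff_of_rowInd_eq (hpar : Even (v.1 + v.2) ↔ Even (w.1 + w.2))
    (h₁ : rowInd 1 v = rowInd 1 w) (h₂ : rowInd 2 v = rowInd 2 w) : v = w := by
  rw [Int.even_iff, Int.even_iff] at hpar
  rw [rowInd_one, rowInd_one] at h₁
  rw [rowInd_two, rowInd_two] at h₂
  ext <;> omega

end Rows

section OutermostNeighbors

variable {W : Set (ℤ × ℤ)} {i : Fin 3} {v a b : ℤ × ℤ}

lemma mem_hexNbhd_of_isOutermostNeighbor (h : IsOutermostNeighbor W i v) : v ∈ hexNbhd W := by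
  rcases h with ⟨⟨w, ⟨hw, hrow⟩, hwv⟩, hle⟩ | ⟨⟨w, ⟨hw, hrow⟩, hwv⟩, hle⟩
  all_goals
    refine ⟨fun hv => ?_, w, hw, hexAdj_of_rowInd_eq hrow.symm (by omega)⟩
    have := hle _ ⟨v, ⟨hv, rfl⟩, rfl⟩
    omega

lemma mem_iff_notMem_of_isOutermostNeighbor (h : IsOutermostNeighbor W i v)
    (ha : rowInd i a = rowInd i v) (hav : rowParam i a = rowParam i v + 1)
    (hb : rowInd i b = rowInd i v) (hbv : rowParam i b = rowParam i v - 1) :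
    a ∈ W ↔ b ∉ W := by
  rcases h with ⟨⟨w, ⟨hw, hrow⟩, hwv⟩, hle⟩ | ⟨⟨w, ⟨hw, hrow⟩, hwv⟩, hle⟩
  · obtain rfl : w = a := eq_of_rowInd_eq_of_rowParam_eq (hrow.trans ha.symm) (hwv.trans hav.symm)
    refine iff_of_true hw fun hbW => ?_
    have := hle _ ⟨b, ⟨hbW, hb⟩, rfl⟩
    omega
  · obtain rfl : w = b := eq_of_rowInd_eq_of_rowParam_eq (hrow.trans hb.symm) (hwv.trans hbv.symm)
    refine iff_of_false (fun haW => ?_) (not_not_intro hw)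
    have := hle _ ⟨a, ⟨haW, ha⟩, rfl⟩
    omega

lemma exists_not_isOutermostNeighbor (W : Set (ℤ × ℤ)) (v : ℤ × ℤ) :
    ∃ i, ¬IsOutermostNeighbor W i v := by
  by_contra! h
  have hrow₀ : (v.1 + 1, v.2) ∈ W ↔ (v.1 - 1, v.2) ∉ W :=
    mem_iff_notMem_of_isOutermostNeighbor (h 0) rfl rfl rfl rfl
  by_cases hv : Even (v.1 + v.2) <;> rw [Int.even_iff] at hv
  · have hrow₁ : (v.1, v.2 + 1) ∈ W ↔ (v.1 - 1, v.2) ∉ W := by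
      apply mem_iff_notMem_of_isOutermostNeighbor (h 1) <;> simp only [rowInd_one, rowParam] <;>
        omega
    have hrow₂ : (v.1 + 1, v.2) ∈ W ↔ (v.1, v.2 + 1) ∉ W := by
      apply mem_iff_notMem_of_isOutermostNeighbor (h 2) <;> simp only [rowInd_two, rowParam] <;>
        omega
    tauto
  · have hrow₁ : (v.1 + 1, v.2) ∈ W ↔ (v.1, v.2 - 1) ∉ W := by
      apply mem_iff_notMem_of_isOutermostNeighbor (h 1) <;> simp only [rowInd_one, rowParam] <;>
        omega
    have hrow₂ : (v.1, v.2 - 1) ∈ W ↔ (v.1 - 1, v.2) ∉ W := by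
      apply mem_iff_notMem_of_isOutermostNeighbor (h 2) <;> simp only [rowInd_two, rowParam] <;>
        omega
    tauto

lemma exists_isOutermostNeighbor_ne (hW : W.Finite) (i : Fin 3) {w : ℤ × ℤ} (hw : w ∈ W) :
    ∃ u v, rowInd i u = rowInd i w ∧ rowInd i v = rowInd i w ∧
      IsOutermostNeighbor W i u ∧ IsOutermostNeighbor W i v ∧ u ≠ v := by
  set S := rowParam i '' {w' ∈ W | rowInd i w' = rowInd i w}
  have hSfin : S.Finite := (hW.subset (Set.sep_subset _ _)).image _
  have hSne : S.Nonempty := ⟨_, w, ⟨hw, rfl⟩, rfl⟩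
  obtain ⟨m, hm, hmin⟩ := S.exists_min_image id hSfin hSne
  obtain ⟨M, hM, hmax⟩ := S.exists_max_image id hSfin hSne
  obtain ⟨u, hu, hum⟩ := exists_rowInd_eq_and_rowParam_eq i (rowInd i w) (m - 1)
  obtain ⟨v, hv, hvM⟩ := exists_rowInd_eq_and_rowParam_eq i (rowInd i w) (M + 1)
  refine ⟨u, v, hu, hv, Or.inl ?_, Or.inr ?_, ?_⟩
  · rw [hu, hum, sub_add_cancel]
    exact ⟨hm, hmin⟩
  · rw [hv, hvM, add_sub_cancel_right]
    exact ⟨hM, hmax⟩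
  · rintro rfl
    have := hmin M hM
    simp only [id] at this
    omega

end OutermostNeighbors

section Isoperimetry

variable {I D : Finset (ℤ × ℤ)}

open scoped Classical in
lemma two_mul_card_image_rowInd_le (hD : hexNbhd I ⊆ D) (i : Fin 3) :
    2 * #(I.image (rowInd i)) ≤ #{v ∈ D | IsOutermostNeighbor I i v} := by
  refine mul_card_image_le_card_of_maps_to (f := rowInd i) (fun v hv => ?_) 2 fun r hr => ?_
  · obtain ⟨⟨w, ⟨hw, hrow⟩, -⟩, -⟩ | ⟨⟨w, ⟨hw, hrow⟩, -⟩, -⟩ := (mem_filter.1 hv).2 <;>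
      exact hrow ▸ mem_image_of_mem _ hw
  · obtain ⟨w, hw, rfl⟩ := mem_image.1 hr
    obtain ⟨u, v, hu, hv, hou, hov, huv⟩ := exists_isOutermostNeighbor_ne I.finite_toSet i hw
    refine one_lt_card.2 ⟨u, ?_, v, ?_, huv⟩ <;> simp only [mem_filter]
    · exact ⟨⟨hD (mem_hexNbhd_of_isOutermostNeighbor hou), hou⟩, hu⟩
    · exact ⟨⟨hD (mem_hexNbhd_of_isOutermostNeighbor hov), hov⟩, hv⟩

lemma sum_card_image_rowInd_le (hD : hexNbhd I ⊆ D) : ∑ i, #(I.image (rowInd i)) ≤ #D := by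
  classical
  have card_le_two (v : ℤ × ℤ) : #{i | IsOutermostNeighbor I i v} ≤ 2 := by
    obtain ⟨i, hi⟩ := exists_not_isOutermostNeighbor I v
    exact Nat.le_of_lt_succ (card_lt_univ_of_notMem (x := i) (by simpa using hi))
  have h : 2 * ∑ i, #(I.image (rowInd i)) ≤ 2 * #D :=
    calc 2 * ∑ i, #(I.image (rowInd i))
        ≤ ∑ i, #{v ∈ D | IsOutermostNeighbor I i v} := by
          rw [mul_sum]
          exact sum_le_sum fun i _ => two_mul_card_image_rowInd_le hD i
      _ = ∑ v ∈ D, #{i | IsOutermostNeighbor I i v} :=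
          sum_card_bipartiteAbove_eq_sum_card_bipartiteBelow _
      _ ≤ 2 * #D := by
          rw [mul_comm]
          exact sum_le_card_nsmul _ _ _ fun v _ => card_le_two v
  exact Nat.le_of_mul_le_mul_left h two_pos

lemma card_le_sumCount_add_sumCount (I : Finset (ℤ × ℤ)) :
    #I ≤ sumCount (I.image (rowInd 0)) (I.image (rowInd 1)) (I.image (rowInd 2)) +
      sumCount ((I.image (rowInd 0)).image (· - 1)) (I.image (rowInd 1)) (I.image (rowInd 2)) := by
  have hinj : Set.InjOn (fun v => (rowInd 1 v, rowInd 2 v)) {v ∈ I | Even (v.1 + v.2)} ∧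
      Set.InjOn (fun v => (rowInd 1 v, rowInd 2 v)) {v ∈ I | ¬Even (v.1 + v.2)} := by
    constructor <;> rintro v ⟨-, hv⟩ w ⟨-, hw⟩ hvw
    · exact eq_of_even_iff_of_rowInd_eq (iff_of_true hv hw) (congr_arg Prod.fst hvw)
        (congr_arg Prod.snd hvw)
    · exact eq_of_even_iff_of_rowInd_eq (iff_of_false hv hw) (congr_arg Prod.fst hvw)
        (congr_arg Prod.snd hvw)
  have hmem (i : Fin 3) {p : ℤ × ℤ → Prop} [DecidablePred p] {v : ℤ × ℤ} (hv : v ∈ I.filter p) :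
      rowInd i v ∈ I.image (rowInd i) :=
    mem_image_of_mem _ (filter_subset _ _ hv)
  rw [← card_filter_add_card_filter_not (s := I) (fun v => Even (v.1 + v.2))]
  refine add_le_add
    (card_le_sumCount (rowInd 1) (rowInd 2) (by simpa using hinj.1) (fun v hv => ?_)
      (fun v => hmem 1) (fun v => hmem 2))
    (card_le_sumCount (rowInd 1) (rowInd 2) (by simpa using hinj.2) (fun v hv => ?_)
      (fun v => hmem 1) (fun v => hmem 2))
  · rw [← rowInd_zero_eq_of_even (mem_filter.1 hv).2]
    exact hmem 0 hv
  · rw [eq_sub_of_add_eq (rowInd_zero_eq_of_not_even (mem_filter.1 hv).2).symm]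
    exact mem_image_of_mem _ (hmem 0 hv)

theorem six_mul_card_le_sq_of_hexNbhd_subset (hD : hexNbhd I ⊆ D) : 6 * #I ≤ #D ^ 2 := by
  obtain rfl | hI := I.eq_empty_or_nonempty
  · simp
  set r : Fin 3 → Finset ℤ := fun i => I.image (rowInd i)
  calc 6 * #I ≤ 6 * (sumCount (r 0) (r 1) (r 2) + sumCount ((r 0).image (· - 1)) (r 1) (r 2)) :=
        Nat.mul_le_mul_left 6 (card_le_sumCount_add_sumCount I)
    _ ≤ (#(r 0) + #(r 1) + #(r 2)) ^ 2 :=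
        six_mul_sumCount_add_sumCount_le (card_image_of_injective _ sub_left_injective).symm
          (image_ne_self_of_forall_lt sub_one_lt (hI.image _)).symm _ _
    _ ≤ #D ^ 2 := by
        gcongr
        simpa only [Fin.sum_univ_three] using sum_card_image_rowInd_le hD

lemma hexNbhd_sdiff_hexBdry_subset (W : Set (ℤ × ℤ)) : hexNbhd (W \ hexBdry W) ⊆ hexBdry W := by
  rintro v ⟨hv, w, ⟨hwW, hwB⟩, hvw⟩
  have hvW : v ∈ W := by
    by_contra hvW
    exact hwB ⟨hwW, v, hvW, hexAdj_symm hvw⟩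
  by_contra hvB
  exact hv ⟨hvW, hvB⟩

end Isoperimetry

end HexGrid

/-- For every finite subset `W` of the vertices of the infinite hexagonal grid,
`|ℬ(W)| ≥ √6 · √(|W| - |ℬ(W)|)`. -/
theorem boundary_ge_sqrt (W : Set (ℤ × ℤ)) (hW : W.Finite) :
    Real.sqrt 6 * Real.sqrt ((W.ncard : ℝ) - ((hexBdry W).ncard : ℝ)) ≤
      ((hexBdry W).ncard : ℝ) := by
  have hsub : hexBdry W ⊆ W := fun v hv => hv.1
  have hB : (hexBdry W).Finite := hW.subset hsub
  have hI : (W \ hexBdry W).Finite := hW.sdiff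
  have hsq : 6 * (W \ hexBdry W).ncard ≤ (hexBdry W).ncard ^ 2 := by
    rw [Set.ncard_eq_toFinset_card _ hI, Set.ncard_eq_toFinset_card _ hB]
    apply HexGrid.six_mul_card_le_sq_of_hexNbhd_subset
    simpa only [Set.Finite.coe_toFinset] using HexGrid.hexNbhd_sdiff_hexBdry_subset W
  rw [← Real.sqrt_mul (by norm_num), ← Set.cast_ncard_sdiff hsub hW]
  exact Real.sqrt_le_iff.2 ⟨by positivity, mod_cast hsq⟩
end

section
/- For every integer r ≥ 1 and every subset W ⊆ V(G_r) with |W| ≤ 3r² (i.e. |W| ≤ |V(G_r)|/2), the number of neighbor vertices of W inside the finite hexagonal grid satisfies |𝒩_{G_r}(W)| ≥ 0.6053 · √|W|. -/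
/-!
In symmetric coordinates the vertices of the grid are the integer triples of sum `1` or `2`, edges
change one coordinate by `1`, and `G_r` is cut out by the box `[1 - r, r]³`. Fixing one coordinate
gives a row, which is a path; hence a row that contains both a vertex of `W` and a vertex outside
`W` contains a neighbor of `W`. Let `n` be the number of neighbors, and call a row full if it lies
in `W` and empty if it avoids `W`.

If two directions have no full row, then every vertex of `W` lies in two rows that contain a
neighbor, and since two coordinates determine a vertex up to two choices, `|W| ≤ 2n²`. If two
directions have no empty row, the same argument bounds the complement of `W`. Otherwise `n ≥ 2r`,
and `2(2r)²` already exceeds the number `6r²` of vertices. This is clear if some direction has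
neither a full nor an empty row, as all its `2r` rows contain a neighbor. In the remaining case a
full row and an empty row of different directions must not cross, so all full and all empty rows
have their indices in the same half of `[1 - r, r]`, and some direction has both a full row and an
empty one. The `r` rows of this direction in the other half contain `r` neighbors, and `r` rows of a
second direction yield `r` further neighbors between the full and the empty row.

The bound `|W| ≤ 2n²` gives the constant `1 / √2`, which is larger than `0.6053`.
-/

/-- Symmetric coordinates of a vertex: the indices of the three rows through it, reoriented so that
they play the same role. The vertices correspond to the integer triples of sum `1` or `2`. -/
def hexCoord (v : ℤ × ℤ) : Fin 3 → ℤ :=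
  ![v.2, -((v.2 - v.1) / 2), 1 - (v.1 + v.2) / 2]

/-- The vertex whose coordinates in the directions `i`, `i + 1`, `i + 2` are `a`, `b`, `c`. This is
meaningful only if `a + b + c` is `1` or `2`. -/
def hexVertex (i : Fin 3) (a b c : ℤ) : ℤ × ℤ :=
  (1 + ![a, b, c] (1 - i) - ![a, b, c] (2 - i), ![a, b, c] (0 - i))

/-- The vertices of the row of direction `j` and index `b`, in the order in which the row passes
through them. -/
def rowVertex (j : Fin 3) (b n : ℤ) : ℤ × ℤ :=
  hexVertex j b ((n + 1) / 2) (1 - b - n / 2)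

/-- Every vertex of `G_r` in the row of direction `i` and index `a` lies in `W`. With `Wᶜ` in place
of `W`, this expresses that no vertex of that row lies in `W`. -/
def IsFullRow (r : ℕ) (W : Set (ℤ × ℤ)) (i : Fin 3) (a : ℤ) : Prop :=
  a ∈ Set.Icc (1 - (r : ℤ)) r ∧ ∀ v ∈ gridVerts r, hexCoord v i = a → v ∈ W

/-- Some row of direction `i` in `G_r` is contained in `W`. -/
def HasFullRow (r : ℕ) (W : Set (ℤ × ℤ)) (i : Fin 3) : Prop :=
  ∃ a, IsFullRow r W i a

section Directions

theorem forall_direction_iff {P : Fin 3 → Prop} (i : Fin 3) :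
    (∀ m, P m) ↔ P i ∧ P (i + 1) ∧ P (i + 2) := by
  fin_cases i <;> simp [Fin.forall_fin_succ] <;> tauto

theorem sum_directions {M : Type*} [AddCommMonoid M] (f : Fin 3 → M) (i : Fin 3) :
    ∑ m, f m = f i + f (i + 1) + f (i + 2) := by
  fin_cases i <;> simp [Fin.sum_univ_three] <;> abel

theorem direction_eq_add_one_or {i j : Fin 3} (hij : i ≠ j) : j = i + 1 ∨ i = j + 1 := by
  decide +revert

theorem exists_and_of_pairwise_or {P Q : Fin 3 → Prop} (hP : ∀ i j, i ≠ j → P i ∨ P j)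
    (hQ : ∀ i j, i ≠ j → Q i ∨ Q j) : ∃ i, P i ∧ Q i := by
  by_contra! h
  have hP01 := hP 0 1 (by decide)
  have hP02 := hP 0 2 (by decide)
  have hP12 := hP 1 2 (by decide)
  have hQ01 := hQ 0 1 (by decide)
  have hQ02 := hQ 0 2 (by decide)
  have hQ12 := hQ 1 2 (by decide)
  grind

theorem exists_distinct_of_pairwise_or {P Q : Fin 3 → Prop} (hP : ∀ i j, i ≠ j → P i ∨ P j)
    (hQ : ∀ i j, i ≠ j → Q i ∨ Q j) (hPQ : ∀ i, P i ∨ Q i) (i : Fin 3) :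
    ∃ m n, i ≠ m ∧ i ≠ n ∧ m ≠ n ∧ P m ∧ Q n := by
  have h12 : i + 1 ≠ i + 2 := by simp
  have hsplit : P (i + 1) ∧ Q (i + 2) ∨ P (i + 2) ∧ Q (i + 1) := by
    have := hP _ _ h12
    have := hQ _ _ h12
    have := hPQ (i + 1)
    have := hPQ (i + 2)
    tauto
  rcases hsplit with ⟨hp, hq⟩ | ⟨hp, hq⟩
  · exact ⟨i + 1, i + 2, by simp, by simp, h12, hp, hq⟩
  · exact ⟨i + 2, i + 1, by simp, by simp, h12.symm, hp, hq⟩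

end Directions

section Coordinates

theorem hexCoord_sum (v : ℤ × ℤ) : ∑ m, hexCoord v m = 1 ∨ ∑ m, hexCoord v m = 2 := by
  simp only [Fin.sum_univ_three, hexCoord, Matrix.cons_val]
  omega

theorem hexCoord_injective : Function.Injective hexCoord := by
  rintro ⟨x, y⟩ ⟨x', y'⟩ h
  have h0 := congrFun h 0
  have h1 := congrFun h 1
  have h2 := congrFun h 2
  simp only [hexCoord, Matrix.cons_val] at h0 h1 h2
  ext <;> dsimp only <;> omega

theorem hexCoord_hexVertex (i : Fin 3) {a b c : ℤ} (h : a + b + c = 1 ∨ a + b + c = 2) :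
    hexCoord (hexVertex i a b c) i = a ∧ hexCoord (hexVertex i a b c) (i + 1) = b ∧
      hexCoord (hexVertex i a b c) (i + 2) = c := by
  fin_cases i <;> simp [hexCoord, hexVertex] <;> omega

theorem hexVertex_hexCoord (i : Fin 3) (v : ℤ × ℤ) :
    hexVertex i (hexCoord v i) (hexCoord v (i + 1)) (hexCoord v (i + 2)) = v := by
  have h := hexCoord_sum v
  rw [sum_directions _ i] at h
  exact hexCoord_injective (funext ((forall_direction_iff i).2 (hexCoord_hexVertex i h)))

theorem eq_of_hexCoord_eq {i j : Fin 3} (hij : i ≠ j) {v w : ℤ × ℤ}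
    (hi : hexCoord v i = hexCoord w i) (hj : hexCoord v j = hexCoord w j)
    (hsum : ∑ m, hexCoord v m = ∑ m, hexCoord w m) : v = w := by
  apply hexCoord_injective
  rcases direction_eq_add_one_or hij with rfl | rfl
  · rw [sum_directions _ i, sum_directions _ i] at hsum
    exact funext ((forall_direction_iff i).2 ⟨hi, hj, by omega⟩)
  · rw [sum_directions _ j, sum_directions _ j] at hsum
    exact funext ((forall_direction_iff j).2 ⟨hj, hi, by omega⟩)

theorem hexAdj_iff_sum_natAbs {v w : ℤ × ℤ} :
    hexAdj v w ↔ ∑ m, (hexCoord v m - hexCoord w m).natAbs = 1 := by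
  simp only [hexAdj, hexCoord, Fin.sum_univ_three, Matrix.cons_val, Int.even_iff]
  omega

theorem mem_hexCell_iff {a b : ℤ} {v : ℤ × ℤ} :
    v ∈ hexCell a b ↔ hexCoord v 0 ∈ Set.Icc b (b + 1) ∧ hexCoord v 1 ∈ Set.Icc a (a + 1) ∧
      hexCoord v 2 ∈ Set.Icc (-a - b) (-a - b + 1) := by
  obtain ⟨x, y⟩ := v
  simp only [hexCell, hexCoord, Matrix.cons_val, Set.mem_insert_iff, Set.mem_singleton_iff,
    Prod.mk.injEq, Set.mem_Icc]
  omega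

/-- A triple of sum `1` becomes the base point of a cell by lowering its largest entry, a triple of
sum `2` by lowering the two other than its smallest entry. -/
theorem exists_cell_of_coords {r : ℕ} (hr : 1 ≤ r) {x y z : ℤ}
    (hsum : x + y + z = 1 ∨ x + y + z = 2) (hx : x ∈ Set.Icc (1 - (r : ℤ)) r)
    (hy : y ∈ Set.Icc (1 - (r : ℤ)) r) (hz : z ∈ Set.Icc (1 - (r : ℤ)) r) :
    ∃ a b : ℤ, a.natAbs + b.natAbs + (a + b).natAbs ≤ 2 * (r - 1) ∧ x ∈ Set.Icc b (b + 1) ∧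
      y ∈ Set.Icc a (a + 1) ∧ z ∈ Set.Icc (-a - b) (-a - b + 1) := by
  simp only [Set.mem_Icc] at *
  rcases hsum with hsum | hsum
  · by_cases hxmax : y ≤ x ∧ z ≤ x
    · exact ⟨y, x - 1, by omega⟩
    by_cases hymax : x ≤ y ∧ z ≤ y
    · exact ⟨y - 1, x, by omega⟩
    · exact ⟨y, x, by omega⟩
  · by_cases hxmin : x ≤ y ∧ x ≤ z
    · exact ⟨y - 1, x, by omega⟩
    by_cases hymin : y ≤ x ∧ y ≤ z
    · exact ⟨y, x - 1, by omega⟩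
    · exact ⟨y - 1, x - 1, by omega⟩

theorem mem_gridVerts_iff {r : ℕ} (hr : 1 ≤ r) {v : ℤ × ℤ} :
    v ∈ gridVerts r ↔ ∀ m, hexCoord v m ∈ Set.Icc (1 - (r : ℤ)) r := by
  have hsum := hexCoord_sum v
  rw [sum_directions _ 0] at hsum
  simp only [gridVerts, Set.mem_ofPred_eq, mem_hexCell_iff]
  rw [forall_direction_iff 0]
  constructor
  · rintro ⟨a, b, hab, h0, h1, h2⟩
    simp only [Set.mem_Icc, zero_add] at *
    omega
  · rintro ⟨h0, h1, h2⟩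
    exact exists_cell_of_coords hr hsum h0 h1 h2

end Coordinates

section Counting

theorem finite_gridVerts {r : ℕ} (hr : 1 ≤ r) : (gridVerts r).Finite := by
  have hbox := (Set.finite_Icc (fun _ : Fin 3 => 1 - (r : ℤ)) fun _ => r).preimage
    hexCoord_injective.injOn
  refine hbox.subset fun v hv => ?_
  rw [mem_gridVerts_iff hr] at hv
  exact ⟨fun m => (hv m).1, fun m => (hv m).2⟩

theorem finite_hexNbhdIn {r : ℕ} (hr : 1 ≤ r) (W : Set (ℤ × ℤ)) : (hexNbhdIn r W).Finite :=
  (finite_gridVerts hr).subset fun _ hv => hv.1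

theorem exists_pos_and_nonpos (v : ℤ × ℤ) :
    ∃ i, 1 ≤ hexCoord v i ∧ hexCoord v (i + 1) ≤ 0 := by
  have hsum := hexCoord_sum v
  rw [sum_directions _ 0] at hsum
  by_contra! h
  have h0 := h 0
  have h1 := h 1
  have h2 := h 2
  simp only [zero_add, Fin.reduceAdd] at *
  omega

/-- The direction `i` with `1 ≤ hexCoord v i` and `hexCoord v (i + 1) ≤ 0` is unique, so the grid is
the disjoint union of three sectors, one for each `i`. -/
theorem bijOn_sectors_gridVerts {r : ℕ} (hr : 1 ≤ r) :
    Set.BijOn (fun t : Fin 3 × ℤ × ℤ × ℤ => hexVertex t.1 t.2.1 t.2.2.1 (t.2.2.2 - t.2.1 - t.2.2.1))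
      (Set.univ ×ˢ Set.Icc 1 (r : ℤ) ×ˢ Set.Icc (1 - (r : ℤ)) 0 ×ˢ {1, 2}) (gridVerts r) := by
  have hcoord (i : Fin 3) {a b s : ℤ} (hs : s = 1 ∨ s = 2) :=
    hexCoord_hexVertex i (a := a) (b := b) (c := s - a - b) (by omega)
  refine ⟨?_, ?_, fun v hv => ?_⟩
  · rintro ⟨i, a, b, s⟩ ⟨-, ha, hb, hs : s = 1 ∨ s = 2⟩
    rw [mem_gridVerts_iff hr, forall_direction_iff i]
    simp only [hcoord i hs, Set.mem_Icc] at ha hb ⊢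
    omega
  · rintro ⟨i, a, b, s⟩ ⟨-, ha, hb, hs : s = 1 ∨ s = 2⟩
      ⟨i', a', b', s'⟩ ⟨-, ha', hb', hs' : s' = 1 ∨ s' = 2⟩ heq
    obtain ⟨h0, h1, h2⟩ := hcoord i (a := a) (b := b) hs
    obtain ⟨h0', h1', h2'⟩ := hcoord i' (a := a') (b := b') hs'
    simp only at heq
    rw [heq] at h0 h1 h2
    simp only [Set.mem_Icc] at ha hb ha' hb'
    obtain rfl : i = i' := by
      by_contra hne
      rcases direction_eq_add_one_or hne with rfl | rfl <;> omega
    simp only [Prod.mk.injEq, true_and]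
    omega
  · obtain ⟨i, hi, hi'⟩ := exists_pos_and_nonpos v
    refine ⟨(i, hexCoord v i, hexCoord v (i + 1), ∑ m, hexCoord v m), ?_, ?_⟩
    · rw [mem_gridVerts_iff hr] at hv
      exact ⟨trivial, ⟨hi, (hv i).2⟩, ⟨(hv (i + 1)).1, hi'⟩, hexCoord_sum v⟩
    · convert hexVertex_hexCoord i v using 2
      simp only [sum_directions _ i]
      ring

theorem ncard_le_of_subset_image {α β : Type*} {f : α → β} {S : Set β} {N : Set α}
    (hN : N.Finite) (hS : S ⊆ f '' N) : S.ncard ≤ N.ncard :=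
  (Set.ncard_le_ncard hS (hN.image f)).trans (Set.ncard_image_le hN)

theorem ncard_Icc_int (a b : ℤ) : (Set.Icc a b).ncard = (b + 1 - a).toNat := by
  rw [← Finset.coe_Icc, Set.ncard_coe_finset, Int.card_Icc]

theorem ncard_gridVerts {r : ℕ} (hr : 1 ≤ r) : (gridVerts r).ncard = 6 * r ^ 2 := by
  rw [← (bijOn_sectors_gridVerts hr).ncard_eq]
  simp only [Set.ncard_prod, Set.ncard_univ, Nat.card_fin, ncard_Icc_int,
    Set.ncard_pair (show (1 : ℤ) ≠ 2 by decide), add_sub_cancel_right, zero_add, sub_sub_cancel,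
    Int.toNat_natCast]
  ring

theorem ncard_le_two_mul_sq_of_image_subset {S N : Set (ℤ × ℤ)} (hN : N.Finite) {i j : Fin 3}
    (hij : i ≠ j) (hi : (hexCoord · i) '' S ⊆ (hexCoord · i) '' N)
    (hj : (hexCoord · j) '' S ⊆ (hexCoord · j) '' N) : S.ncard ≤ 2 * N.ncard ^ 2 := by
  let T : Set (ℤ × ℤ × ℤ) := ((hexCoord · i) '' N) ×ˢ ((hexCoord · j) '' N) ×ˢ {1, 2}
  have hT : T.Finite := (hN.image _).prod ((hN.image _).prod (by simp))
  have hST : S.ncard ≤ T.ncard := by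
    refine Set.ncard_le_ncard_of_injOn
      (fun v => (hexCoord v i, hexCoord v j, ∑ m, hexCoord v m)) (fun v hv => ?_) ?_ hT
    · exact ⟨hi ⟨v, hv, rfl⟩, hj ⟨v, hv, rfl⟩, hexCoord_sum v⟩
    · intro v _ w _ h
      simp only [Prod.mk.injEq] at h
      exact eq_of_hexCoord_eq hij h.1 h.2.1 h.2.2
  calc S.ncard ≤ T.ncard := hST
    _ = ((hexCoord · i) '' N).ncard * (((hexCoord · j) '' N).ncard * 2) := by
      rw [Set.ncard_prod, Set.ncard_prod, Set.ncard_pair (by norm_num)]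
    _ ≤ N.ncard * (N.ncard * 2) := by
      gcongr <;> exact Set.ncard_image_le hN
    _ = 2 * N.ncard ^ 2 := by ring

end Counting

section Rows

theorem hexCoord_rowVertex (j : Fin 3) (b n : ℤ) :
    hexCoord (rowVertex j b n) j = b ∧ hexCoord (rowVertex j b n) (j + 1) = (n + 1) / 2 ∧
      hexCoord (rowVertex j b n) (j + 2) = 1 - b - n / 2 :=
  hexCoord_hexVertex j (by omega)

theorem exists_rowVertex_eq (j : Fin 3) (v : ℤ × ℤ) :
    ∃ n, rowVertex j (hexCoord v j) n = v := by
  have hsum := hexCoord_sum v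
  rw [sum_directions _ j] at hsum
  refine ⟨hexCoord v (j + 1) - hexCoord v (j + 2) + 1 - hexCoord v j, ?_⟩
  conv_rhs => rw [← hexVertex_hexCoord j v]
  rw [rowVertex]
  congr 1 <;> omega

theorem hexAdj_rowVertex (j : Fin 3) (b : ℤ) {m n : ℤ} (hmn : (m - n).natAbs = 1) :
    hexAdj (rowVertex j b m) (rowVertex j b n) := by
  rw [hexAdj_iff_sum_natAbs, sum_directions _ j]
  simp only [hexCoord_rowVertex]
  omega

theorem hexCoord_rowVertex_mem_uIcc (j : Fin 3) (b : ℤ) {x y n : ℤ} (hn : n ∈ Set.uIcc x y)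
    (m : Fin 3) : hexCoord (rowVertex j b n) m ∈
      Set.uIcc (hexCoord (rowVertex j b x) m) (hexCoord (rowVertex j b y) m) := by
  revert m
  simp only [forall_direction_iff j, hexCoord_rowVertex, Set.mem_uIcc] at *
  omega

theorem exists_consecutive_change {P : ℤ → Prop} {a b : ℤ} (ha : P a) (hb : ¬ P b) :
    ∃ m n, n ∈ Set.uIcc a b ∧ (n - m).natAbs = 1 ∧ P m ∧ ¬ P n := by
  by_contra! h
  have hpath : Relation.ReflTransGen (fun m n => P m → P n) a b := by
    refine reflTransGen_of_succ _ (fun m hm => ?_) fun m hm => ?_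
    · exact h m (m + 1) (Set.mem_uIcc.2 (.inl ⟨by grind, hm.2⟩)) (by simp)
    · exact h (m + 1) m (Set.mem_uIcc.2 (.inr ⟨hm.1, hm.2.le⟩)) (by simp)
  exact hb (hpath.rec (motive := fun n _ => P n) ha fun _ hstep hP => hstep hP)

theorem exists_mem_hexNbhdIn_between {r : ℕ} (hr : 1 ≤ r) {W : Set (ℤ × ℤ)} {j : Fin 3}
    {p q : ℤ × ℤ} (hp : p ∈ gridVerts r) (hq : q ∈ gridVerts r) (hpW : p ∈ W) (hqW : q ∉ W)
    (hpq : hexCoord p j = hexCoord q j) :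
    ∃ n ∈ hexNbhdIn r W, ∀ m, hexCoord n m ∈ Set.uIcc (hexCoord p m) (hexCoord q m) := by
  obtain ⟨x, hx⟩ := exists_rowVertex_eq j p
  obtain ⟨y, hy⟩ := exists_rowVertex_eq j q
  rw [hpq] at hx
  obtain ⟨k, n, hn, hnk, hkW, hnW⟩ := exists_consecutive_change
    (P := fun n => rowVertex j (hexCoord q j) n ∈ W) (a := x) (b := y) (by rwa [hx]) (by rwa [hy])
  have hbox := hexCoord_rowVertex_mem_uIcc j (hexCoord q j) hn
  rw [hx, hy] at hbox
  rw [mem_gridVerts_iff hr] at hp hq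
  have hgrid : rowVertex j (hexCoord q j) n ∈ gridVerts r :=
    (mem_gridVerts_iff hr).2 fun m => Set.uIcc_subset_Icc (hp m) (hq m) (hbox m)
  exact ⟨_, ⟨hgrid, hnW, _, hkW, hexAdj_rowVertex j _ hnk⟩, hbox⟩

theorem exists_mem_gridVerts_hexCoord_eq {r : ℕ} (hr : 1 ≤ r) {i j : Fin 3} (hij : i ≠ j) {a b : ℤ}
    (ha : a ∈ Set.Icc (1 - (r : ℤ)) r) (hb : b ∈ Set.Icc (1 - (r : ℤ)) r)
    (hab : a + b ∈ Set.Icc (1 - (r : ℤ)) (r + 1)) :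
    ∃ v ∈ gridVerts r, hexCoord v i = a ∧ hexCoord v j = b := by
  wlog hj : j = i + 1 generalizing i j a b
  · have hi : i = j + 1 := (direction_eq_add_one_or hij).resolve_left hj
    obtain ⟨v, hv, hvj, hvi⟩ := this hij.symm hb ha (by rwa [add_comm b a]) hi
    exact ⟨v, hv, hvi, hvj⟩
  subst hj
  obtain ⟨c, hc, hcr⟩ :
      ∃ c, (a + b + c = 1 ∨ a + b + c = 2) ∧ c ∈ Set.Icc (1 - (r : ℤ)) r := by
    simp only [Set.mem_Icc] at hab ⊢
    by_cases h : a + b ≤ r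
    · exact ⟨1 - a - b, by omega⟩
    · exact ⟨2 - a - b, by omega⟩
  obtain ⟨h0, h1, h2⟩ := hexCoord_hexVertex i hc
  refine ⟨hexVertex i a b c, ?_, h0, h1⟩
  rw [mem_gridVerts_iff hr, forall_direction_iff i, h0, h1, h2]
  exact ⟨ha, hb, hcr⟩

end Rows

section FullRows

variable {r : ℕ} {W : Set (ℤ × ℤ)}

theorem exists_mem_hexNbhdIn_of_not_isFullRow (hr : 1 ≤ r) {i : Fin 3} {a : ℤ}
    (ha : a ∈ Set.Icc (1 - (r : ℤ)) r) (hfull : ¬ IsFullRow r W i a)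
    (hempty : ¬ IsFullRow r Wᶜ i a) :
    ∃ n ∈ hexNbhdIn r W, hexCoord n i = a := by
  simp only [IsFullRow, ha, true_and, not_forall, Set.mem_compl_iff, not_not] at hfull hempty
  obtain ⟨q, hq, hqa, hqW⟩ := hfull
  obtain ⟨p, hp, hpa, hpW⟩ := hempty
  obtain ⟨n, hn, hbox⟩ := exists_mem_hexNbhdIn_between hr hp hq hpW hqW (hpa.trans hqa.symm)
  have hni := hbox i
  rw [hpa, hqa, Set.uIcc_self] at hni
  exact ⟨n, hn, hni⟩

theorem ncard_le_of_not_hasFullRow (hr : 1 ≤ r) (hW : W ⊆ gridVerts r) {i j : Fin 3}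
    (hij : i ≠ j) (hi : ¬ HasFullRow r W i) (hj : ¬ HasFullRow r W j) :
    W.ncard ≤ 2 * (hexNbhdIn r W).ncard ^ 2 := by
  have hrow {m : Fin 3} (hm : ¬ HasFullRow r W m) :
      (hexCoord · m) '' W ⊆ (hexCoord · m) '' hexNbhdIn r W := by
    rintro _ ⟨v, hv, rfl⟩
    exact exists_mem_hexNbhdIn_of_not_isFullRow hr ((mem_gridVerts_iff hr).1 (hW hv) m)
      (fun h => hm ⟨_, h⟩) fun h => h.2 v (hW hv) rfl hv
  exact ncard_le_two_mul_sq_of_image_subset (finite_hexNbhdIn hr W) hij (hrow hi) (hrow hj)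

theorem ncard_sdiff_le_of_not_hasFullRow_compl (hr : 1 ≤ r) {i j : Fin 3} (hij : i ≠ j)
    (hi : ¬ HasFullRow r Wᶜ i) (hj : ¬ HasFullRow r Wᶜ j) :
    (gridVerts r \ W).ncard ≤ 2 * (hexNbhdIn r W).ncard ^ 2 := by
  have hrow {m : Fin 3} (hm : ¬ HasFullRow r Wᶜ m) :
      (hexCoord · m) '' (gridVerts r \ W) ⊆ (hexCoord · m) '' hexNbhdIn r W := by
    rintro _ ⟨v, hv, rfl⟩
    exact exists_mem_hexNbhdIn_of_not_isFullRow hr ((mem_gridVerts_iff hr).1 hv.1 m)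
      (fun h => hv.2 (h.2 v hv.1 rfl)) fun h => hm ⟨_, h⟩
  exact ncard_le_two_mul_sq_of_image_subset (finite_hexNbhdIn hr W) hij (hrow hi) (hrow hj)

theorem two_mul_le_ncard_hexNbhdIn_of_not_hasFullRow (hr : 1 ≤ r) {i : Fin 3}
    (hfull : ¬ HasFullRow r W i) (hempty : ¬ HasFullRow r Wᶜ i) :
    2 * r ≤ (hexNbhdIn r W).ncard := by
  have hrows : Set.Icc (1 - (r : ℤ)) r ⊆ (hexCoord · i) '' hexNbhdIn r W := fun a ha =>
    exists_mem_hexNbhdIn_of_not_isFullRow hr ha (fun h => hfull ⟨a, h⟩) fun h => hempty ⟨a, h⟩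
  have hcard := ncard_le_of_subset_image (finite_hexNbhdIn hr W) hrows
  rw [ncard_Icc_int] at hcard
  omega

theorem IsFullRow.nonpos_iff (hr : 1 ≤ r) {i j : Fin 3} (hij : i ≠ j) {a b : ℤ}
    (ha : IsFullRow r W i a) (hb : IsFullRow r Wᶜ j b) : a ≤ 0 ↔ b ≤ 0 := by
  by_contra hab
  have har := Set.mem_Icc.1 ha.1
  have hbr := Set.mem_Icc.1 hb.1
  obtain ⟨v, hv, hvi, hvj⟩ :=
    exists_mem_gridVerts_hexCoord_eq hr hij ha.1 hb.1 (by rw [Set.mem_Icc]; omega)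
  exact hb.2 v hv hvj (ha.2 v hv hvi)

/-- Rows of the same direction do not cross, but they can be compared through full rows of the two
other directions. -/
theorem IsFullRow.nonpos_iff_of_same_direction (hr : 1 ≤ r)
    (hfull : ∀ i j, i ≠ j → HasFullRow r W i ∨ HasFullRow r W j)
    (hempty : ∀ i j, i ≠ j → HasFullRow r Wᶜ i ∨ HasFullRow r Wᶜ j)
    (hor : ∀ i, HasFullRow r W i ∨ HasFullRow r Wᶜ i) {i : Fin 3} {a b : ℤ}
    (ha : IsFullRow r W i a) (hb : IsFullRow r Wᶜ i b) : a ≤ 0 ↔ b ≤ 0 := by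
  obtain ⟨m, n, him, hin, hmn, ⟨c, hc⟩, d, hd⟩ := exists_distinct_of_pairwise_or hfull hempty hor i
  calc a ≤ 0 ↔ d ≤ 0 := ha.nonpos_iff hr hin hd
    _ ↔ c ≤ 0 := (hc.nonpos_iff hr hmn hd).symm
    _ ↔ b ≤ 0 := hc.nonpos_iff hr him.symm hb

/-- The half of the row indices `[1 - r, r]` that does not contain `a`. -/
def oppositeHalf (r : ℕ) (a : ℤ) : Set ℤ :=
  {k ∈ Set.Icc (1 - (r : ℤ)) r | ¬ (k ≤ 0 ↔ a ≤ 0)}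

theorem ncard_oppositeHalf (r : ℕ) (a : ℤ) : (oppositeHalf r a).ncard = r := by
  by_cases ha : a ≤ 0
  · have h : oppositeHalf r a = Set.Icc 1 (r : ℤ) := by
      ext k
      simp only [oppositeHalf, Set.mem_ofPred_eq, Set.mem_Icc]
      omega
    rw [h, ncard_Icc_int]
    omega
  · have h : oppositeHalf r a = Set.Icc (1 - (r : ℤ)) 0 := by
      ext k
      simp only [oppositeHalf, Set.mem_ofPred_eq, Set.mem_Icc]
      omega
    rw [h, ncard_Icc_int]
    omega

/-- The neighbors in the half of the rows of direction `i` opposite to `a` and `b` are counted along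
these rows, the others along rows of a second direction, which run from `a` to `b`. -/
theorem two_mul_le_ncard_hexNbhdIn_of_nonpos_iff (hr : 1 ≤ r) {i : Fin 3} {a b : ℤ}
    (ha : IsFullRow r W i a) (hb : IsFullRow r Wᶜ i b)
    (hside : ∀ c d, IsFullRow r W i c → IsFullRow r Wᶜ i d → (c ≤ 0 ↔ d ≤ 0)) :
    2 * r ≤ (hexNbhdIn r W).ncard := by
  let N := hexNbhdIn r W
  let K := oppositeHalf r a
  have hN : N.Finite := finite_hexNbhdIn hr W
  have hab := hside a b ha hb
  have har := Set.mem_Icc.1 ha.1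
  have hbr := Set.mem_Icc.1 hb.1
  have hopposite : K ⊆ (hexCoord · i) '' (N ∩ (hexCoord · i) ⁻¹' K) := by
    intro k hk
    obtain ⟨n, hn, rfl⟩ := exists_mem_hexNbhdIn_of_not_isFullRow hr hk.1
      (fun h => hk.2 ((hside k b h hb).trans hab.symm)) fun h => hk.2 (hside a k ha h).symm
    exact ⟨n, ⟨hn, hk⟩, rfl⟩
  have hsame : K ⊆ (hexCoord · (i + 1)) '' (N \ (hexCoord · i) ⁻¹' K) := by
    rintro k ⟨hk, hka⟩
    have hkr := Set.mem_Icc.1 hk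
    have hne : i ≠ i + 1 := by simp
    obtain ⟨p, hp, hpi, hpk⟩ :=
      exists_mem_gridVerts_hexCoord_eq hr hne ha.1 hk (by rw [Set.mem_Icc]; omega)
    obtain ⟨q, hq, hqi, hqk⟩ :=
      exists_mem_gridVerts_hexCoord_eq hr hne hb.1 hk (by rw [Set.mem_Icc]; omega)
    obtain ⟨n, hn, hbox⟩ := exists_mem_hexNbhdIn_between hr hp hq (ha.2 p hp hpi)
      (hb.2 q hq hqi) (hpk.trans hqk.symm)
    have hni := hbox i
    have hnk := hbox (i + 1)
    rw [hpi, hqi, Set.mem_uIcc] at hni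
    rw [hpk, hqk, Set.uIcc_self] at hnk
    exact ⟨n, ⟨hn, fun h : hexCoord n i ∈ K => h.2 (by omega)⟩, hnk⟩
  calc 2 * r = K.ncard + K.ncard := by rw [ncard_oppositeHalf, two_mul]
    _ ≤ (N ∩ (hexCoord · i) ⁻¹' K).ncard + (N \ (hexCoord · i) ⁻¹' K).ncard :=
      add_le_add (ncard_le_of_subset_image (hN.subset Set.inter_subset_left) hopposite)
        (ncard_le_of_subset_image (hN.subset Set.sdiff_subset) hsame)
    _ = N.ncard := Set.ncard_inter_add_ncard_sdiff_eq_ncard N _ hN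

theorem two_mul_le_ncard_hexNbhdIn_of_hasFullRow (hr : 1 ≤ r)
    (hfull : ∀ i j, i ≠ j → HasFullRow r W i ∨ HasFullRow r W j)
    (hempty : ∀ i j, i ≠ j → HasFullRow r Wᶜ i ∨ HasFullRow r Wᶜ j)
    (hor : ∀ i, HasFullRow r W i ∨ HasFullRow r Wᶜ i) : 2 * r ≤ (hexNbhdIn r W).ncard := by
  obtain ⟨i, ⟨a, ha⟩, b, hb⟩ := exists_and_of_pairwise_or hfull hempty
  exact two_mul_le_ncard_hexNbhdIn_of_nonpos_iff hr ha hb fun _ _ hc hd =>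
    hc.nonpos_iff_of_same_direction hr hfull hempty hor hd

end FullRows

theorem finite_hex_neighbor_isoperimetric_general {r : ℕ} (hr : 1 ≤ r) {W : Set (ℤ × ℤ)}
    (hW : W ⊆ gridVerts r) :
    min W.ncard (gridVerts r \ W).ncard ≤ 2 * (hexNbhdIn r W).ncard ^ 2 := by
  by_cases hfull : ∀ i j, i ≠ j → HasFullRow r W i ∨ HasFullRow r W j
  swap
  · push Not at hfull
    obtain ⟨i, j, hij, hi, hj⟩ := hfull
    exact min_le_of_left_le (ncard_le_of_not_hasFullRow hr hW hij hi hj)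
  by_cases hempty : ∀ i j, i ≠ j → HasFullRow r Wᶜ i ∨ HasFullRow r Wᶜ j
  swap
  · push Not at hempty
    obtain ⟨i, j, hij, hi, hj⟩ := hempty
    exact min_le_of_right_le (ncard_sdiff_le_of_not_hasFullRow_compl hr hij hi hj)
  have hlarge : 2 * r ≤ (hexNbhdIn r W).ncard := by
    by_cases hor : ∀ i, HasFullRow r W i ∨ HasFullRow r Wᶜ i
    · exact two_mul_le_ncard_hexNbhdIn_of_hasFullRow hr hfull hempty hor
    · push Not at hor
      obtain ⟨i, hi, hi'⟩ := hor
      exact two_mul_le_ncard_hexNbhdIn_of_not_hasFullRow hr hi hi'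
  calc min W.ncard (gridVerts r \ W).ncard ≤ (gridVerts r).ncard :=
        min_le_of_left_le (Set.ncard_le_ncard hW (finite_gridVerts hr))
    _ = 6 * r ^ 2 := ncard_gridVerts hr
    _ ≤ 2 * (2 * r) ^ 2 := by nlinarith
    _ ≤ 2 * (hexNbhdIn r W).ncard ^ 2 := by gcongr

/-- For every `r ≥ 1` and every `W ⊆ V(G_r)` with `|W| ≤ 3r²`,
`|𝒩_{G_r}(W)| ≥ 0.6053 · √|W|`. -/
theorem finite_hex_neighbor_isoperimetric (r : ℕ) (hr : 1 ≤ r) (W : Set (ℤ × ℤ))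
    (hWsub : W ⊆ gridVerts r) (hWfin : W.Finite) (hcard : W.ncard ≤ 3*r^2) :
    (0.6053 : ℝ) * Real.sqrt W.ncard ≤ ((hexNbhdIn r W).ncard : ℝ) := by
  have hhalf : W.ncard ≤ (gridVerts r \ W).ncard := by
    have := Set.ncard_sdiff_add_ncard_of_subset hWsub (finite_gridVerts hr)
    have := ncard_gridVerts hr
    omega
  have hbound := finite_hex_neighbor_isoperimetric_general hr hWsub
  rw [min_eq_left hhalf] at hbound
  have hbound' : (W.ncard : ℝ) ≤ 2 * ((hexNbhdIn r W).ncard : ℝ) ^ 2 := by exact_mod_cast hbound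
  have hsq := Real.sq_sqrt (Nat.cast_nonneg (α := ℝ) W.ncard)
  nlinarith
end
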